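/- Let F₄ = GF(4), let n be odd, let g₁, g₂ be monic divisors of Xⁿ−1 in F₄[X], and let ν ∈ F₄[X] with ν−1 coprime to Xⁿ−1. Let C ⊆ F₄^{2n} be the F₄-span of all vectors ([a·ν·g₁]ₙ, [a·g₁]ₙ) and ([b·g₂]ₙ, [b·ν·g₂]ₙ) for a, b ∈ F₄[X], and let D ⊆ F₄^{2n} be the F₄-span of all vectors ([−ν̄·c·g₁^{⊥h}]ₙ, [c·g₁^{⊥h}]ₙ) and ([s·g₂^{⊥h}]ₙ, [−ν̄·s·g₂^{⊥h}]ₙ) for c, s ∈ F₄[X]. Then D = C^{⊥h}; in particular the F₄-dimension of D equals deg g₁ + deg g₂. -/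

import Mathlib

open Polynomial

set_option synthInstance.maxHeartbeats 1000000
set_option maxHeartbeats 1000000

noncomputable section

/-- The field `F₄ = GF(4)`. -/
abbrev F4 : Type := GaloisField 2 2

/-- The coefficient vector `[p]ₙ ∈ F₄ⁿ` of the remainder of `p` modulo `Xⁿ - 1`
(coefficient of `X^i` in position `i`). -/
def coeffVec (n : ℕ) (p : Polynomial F4) : Fin n → F4 :=
  fun i => (p % (X ^ n - 1)).coeff i

/-- The Hermitian inner product `⟨u,v⟩_h = ∑ i, u i * (v i)²` on `F₄^m`. -/
def hermInner {m : ℕ} (u v : Fin m → F4) : F4 := ∑ i, u i * (v i) ^ 2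

/-- The Hermitian inner product on `F₄ⁿ × F₄ⁿ`: the sum of the Hermitian inner
products of the two components. -/
def hermInner2 {n : ℕ} (u v : (Fin n → F4) × (Fin n → F4)) : F4 :=
  hermInner u.1 v.1 + hermInner u.2 v.2

/-- The conjugate transform `f̄ := f₀² + ∑_{i=1}^{n-1} f_i² X^{n-i}`, where `f` is first
reduced modulo `Xⁿ - 1`. -/
def conjT (n : ℕ) (f : Polynomial F4) : Polynomial F4 :=
  C (((f % (X ^ n - 1)).coeff 0) ^ 2) +
    ∑ i ∈ Finset.Ico 1 n, C (((f % (X ^ n - 1)).coeff i) ^ 2) * X ^ (n - i)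

/-- The Hermitian dual generator `g^{⊥h}(X) := ∑_{j=0}^{deg h} (h_j)² X^{deg h - j}`,
the conjugate reciprocal of the check polynomial `h = (Xⁿ-1)/g`. -/
def dualGen (n : ℕ) (g : Polynomial F4) : Polynomial F4 :=
  ∑ j ∈ Finset.range (((X ^ n - 1) / g).natDegree + 1),
    C ((((X ^ n - 1) / g).coeff j) ^ 2) * X ^ (((X ^ n - 1) / g).natDegree - j)

lemma hermInner_add_right {m : ℕ} (u v w : Fin m → F4) :
    hermInner u (v + w) = hermInner u v + hermInner u w := by
  simp only [hermInner, Pi.add_apply]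
  rw [← Finset.sum_add_distrib]
  refine Finset.sum_congr rfl fun i _ => ?_
  rw [add_pow_char (v i) (w i) 2, mul_add]

lemma hermInner_smul_right {m : ℕ} (c : F4) (u v : Fin m → F4) :
    hermInner u (c • v) = c ^ 2 * hermInner u v := by
  simp only [hermInner, Pi.smul_apply, smul_eq_mul, mul_pow, Finset.mul_sum]
  exact Finset.sum_congr rfl fun i _ => by ring

/-- The Hermitian dual code `C^{⊥h} = {v | ∀ u ∈ C, ⟨u,v⟩_h = 0}` of a linear code in `F₄^m`. -/
def hermDual {m : ℕ} (Ccode : Submodule F4 (Fin m → F4)) : Submodule F4 (Fin m → F4) where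
  carrier := {v | ∀ u ∈ Ccode, hermInner u v = 0}
  zero_mem' := by intro u _; simp [hermInner]
  add_mem' := by
    intro v w hv hw u hu
    rw [hermInner_add_right, hv u hu, hw u hu, add_zero]
  smul_mem' := by
    intro c v hv u hu
    rw [hermInner_smul_right, hv u hu, mul_zero]

lemma hermInner2_add_right {n : ℕ} (u v w : (Fin n → F4) × (Fin n → F4)) :
    hermInner2 u (v + w) = hermInner2 u v + hermInner2 u w := by
  simp only [hermInner2, Prod.fst_add, Prod.snd_add, hermInner_add_right]
  ring

lemma hermInner2_smul_right {n : ℕ} (c : F4) (u v : (Fin n → F4) × (Fin n → F4)) :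
    hermInner2 u (c • v) = c ^ 2 * hermInner2 u v := by
  simp only [hermInner2, Prod.smul_fst, Prod.smul_snd, hermInner_smul_right]
  ring

/-- The Hermitian dual code of a linear code in `F₄ⁿ × F₄ⁿ` (identified with `F₄^{2n}`). -/
def hermDualPair {n : ℕ} (Ccode : Submodule F4 ((Fin n → F4) × (Fin n → F4))) :
    Submodule F4 ((Fin n → F4) × (Fin n → F4)) where
  carrier := {v | ∀ u ∈ Ccode, hermInner2 u v = 0}
  zero_mem' := by intro u _; simp [hermInner2, hermInner]
  add_mem' := by
    intro v w hv hw u hu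
    rw [hermInner2_add_right, hv u hu, hw u hu, add_zero]
  smul_mem' := by
    intro c v hv u hu
    rw [hermInner2_smul_right, hv u hu, mul_zero]

/-- Hamming weight of a vector. -/
def hammingWt {m : ℕ} (u : Fin m → F4) : ℕ := Nat.card {i : Fin m // u i ≠ 0}

/-- The 2-generator quasi-cyclic code `C(g₁,g₂,ν)` of length `2n` and index 2:
the `F₄`-span of all `([a·ν·g₁]ₙ, [a·g₁]ₙ)` and `([b·g₂]ₙ, [b·ν·g₂]ₙ)`. -/
def Cqc (n : ℕ) (g₁ g₂ ν : Polynomial F4) : Submodule F4 ((Fin n → F4) × (Fin n → F4)) :=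
  Submodule.span F4
    ({x | ∃ a : Polynomial F4, x = (coeffVec n (a * ν * g₁), coeffVec n (a * g₁))} ∪
     {x | ∃ b : Polynomial F4, x = (coeffVec n (b * g₂), coeffVec n (b * ν * g₂))})

/-- The quasi-cyclic code `D`: the `F₄`-span of all `([-ν̄·c·g₁^{⊥h}]ₙ, [c·g₁^{⊥h}]ₙ)`
and `([s·g₂^{⊥h}]ₙ, [-ν̄·s·g₂^{⊥h}]ₙ)`. -/
def Dqc (n : ℕ) (g₁ g₂ ν : Polynomial F4) : Submodule F4 ((Fin n → F4) × (Fin n → F4)) :=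
  Submodule.span F4
    ({x | ∃ c : Polynomial F4,
        x = (coeffVec n (-(conjT n ν) * c * dualGen n g₁), coeffVec n (c * dualGen n g₁))} ∪
     {x | ∃ s : Polynomial F4,
        x = (coeffVec n (s * dualGen n g₂), coeffVec n (-(conjT n ν) * s * dualGen n g₂))})

/-- The quotient ring `R = F₄[X]/(Xⁿ - 1)`. -/
abbrev Rng (n : ℕ) : Type := Polynomial F4 ⧸ Ideal.span ({X ^ n - 1} : Set (Polynomial F4))

/-- The natural projection `F₄[X] → R`. -/
def toRng (n : ℕ) : Polynomial F4 →+* Rng n := Ideal.Quotient.mk _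

/-- The `R`-linear map `R → R × R`, `a ↦ (a·û, a·v̂)`, where `û, v̂` are the images of
`u, v` in `R`. -/
def qcMap (n : ℕ) (u v : Polynomial F4) : Rng n →ₗ[Rng n] Rng n × Rng n :=
  (LinearMap.toSpanSingleton (Rng n) (Rng n) (toRng n u)).prod
    (LinearMap.toSpanSingleton (Rng n) (Rng n) (toRng n v))

/-!
Write `R = F₄[X]/(Xⁿ - 1)` and let `σ : R → R` be the involution `X ↦ X⁻¹`, `a ↦ a²`. For `r` in
`R` put `T_r (x, y) = (y - r x, x - r y)`. Then `C = T_{-ν} ((g₁) × (g₂))` and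
`D = T_ν̄ ((g₁^{⊥h}) × (g₂^{⊥h}))`, where `ν̄ = σ ν`. Multiplication by `r` has adjoint
multiplication by `σ r`, so the adjoint of `T_{-ν}` is `T_{-ν̄}` and
`C^{⊥h} = T_{-ν̄}⁻¹ ((g₁)^{⊥h} × (g₂)^{⊥h})`. Since `T_{-ν̄} T_ν̄ = 1 - ν̄² = (ν̄ - 1)²` is a
unit, this preimage is the image under the injective map `T_ν̄`, and both claims reduce to the
cyclic codes `(g₁)` and `(g₂)`.
-/

section Twist

variable {R M : Type*} [CommRing R] [AddCommGroup M] [Module R M]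

/-- The symmetric map `(x, y) ↦ (y - r x, x - r y)` of `M × M`, through which both quasi-cyclic
codes are obtained from a pair of cyclic codes. -/
def twist (r : R) : M × M →ₗ[R] M × M :=
  (LinearMap.snd R M M - r • LinearMap.fst R M M).prod
    (LinearMap.fst R M M - r • LinearMap.snd R M M)

lemma twist_apply (r : R) (z : M × M) : twist r z = (z.2 - r • z.1, z.1 - r • z.2) := rfl

lemma twist_neg_twist (r : R) (z : M × M) : twist (-r) (twist r z) = (1 - r ^ 2) • z := by
  ext <;> simp only [twist_apply, Prod.smul_fst, Prod.smul_snd] <;> module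

lemma twist_injective {r : R} (hr : IsUnit (1 - r ^ 2)) :
    Function.Injective (twist r : M × M →ₗ[R] M × M) := fun x y hxy => by
  rw [← hr.smul_left_cancel, ← twist_neg_twist, ← twist_neg_twist, hxy]

lemma map_twist_eq_comap_twist_neg {r : R} (hr : IsUnit (1 - r ^ 2)) (N : Submodule R (M × M)) :
    N.map (twist r) = N.comap (twist (-r)) := by
  ext z
  rw [Submodule.mem_comap]
  constructor
  · rintro ⟨m, hm, rfl⟩
    rw [twist_neg_twist]
    exact N.smul_mem _ hm
  · intro hz
    obtain ⟨u, hu⟩ := hr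
    refine ⟨(↑u⁻¹ : R) • twist (-r) z, N.smul_mem _ hz, ?_⟩
    have := twist_neg_twist (-r) z
    rw [neg_neg, neg_sq, ← hu] at this
    rw [map_smul, this, smul_smul, Units.inv_mul, one_smul]

end Twist

lemma annihilator_span_mk_of_mul_eq {A : Type*} [CommRing A] [IsDomain A] {a b f : A}
    (hf : a * b = f) (hb : b ≠ 0) :
    (Ideal.span {Ideal.Quotient.mk (Ideal.span {f}) b}).annihilator =
      Ideal.span {Ideal.Quotient.mk (Ideal.span {f}) a} := by
  have le : Ideal.span {f} ≤ Ideal.span {a} := by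
    rw [Ideal.span_singleton_le_span_singleton]
    exact ⟨b, hf.symm⟩
  ext x
  obtain ⟨p, rfl⟩ := Ideal.Quotient.mk_surjective x
  rw [Submodule.mem_annihilator_span_singleton, smul_eq_mul, ← map_mul,
    Ideal.Quotient.eq_zero_iff_dvd, ← Set.image_singleton, ← Ideal.map_span,
    Ideal.mem_quotient_iff_mem le, Ideal.mem_span_singleton]
  nth_rw 1 [← hf]
  exact mul_dvd_mul_iff_right hb

lemma finrank_span_mk_of_mul_eq {K : Type*} [Field K] {a b f : K[X]} (hf : a * b = f) (ha : a ≠ 0) :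
    Module.finrank K (Ideal.span {Ideal.Quotient.mk (Ideal.span {f}) a}) = b.natDegree := by
  have torsion : Ideal.torsionOf K[X] (K[X] ⧸ Ideal.span {f}) (Ideal.Quotient.mk _ a) =
      Ideal.span {b} := by
    ext p
    rw [Ideal.mem_torsionOf_iff, Ideal.mem_span_singleton]
    change Ideal.Quotient.mk _ (p * a) = 0 ↔ _
    rw [Ideal.Quotient.eq_zero_iff_dvd, ← hf, mul_comm p, mul_dvd_mul_iff_left ha]
  have e := (Ideal.quotTorsionOfEquivSpanSingleton K[X] (K[X] ⧸ Ideal.span {f})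
    (Ideal.Quotient.mk _ a)).restrictScalars K
  rw [← Submodule.restrictScalars_span K[X] (K[X] ⧸ Ideal.span {f})
    Ideal.Quotient.mk_surjective] at e
  rw [← finrank_quotient_span_eq_natDegree, ← torsion]
  exact e.finrank_eq.symm

lemma finrank_submodule_prod {K V W : Type*} [DivisionRing K] [AddCommGroup V] [AddCommGroup W]
    [Module K V] [Module K W] [Module.Finite K V] [Module.Finite K W]
    (p : Submodule K V) (q : Submodule K W) :
    Module.finrank K (p.prod q) = Module.finrank K p + Module.finrank K q := by
  have inj : Function.Injective (p.subtype.prodMap q.subtype) :=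
    p.subtype_injective.prodMap q.subtype_injective
  rw [← Module.finrank_prod, ← LinearMap.finrank_range_of_inj inj, LinearMap.range_prodMap,
    p.range_subtype, q.range_subtype]

section XPowSubOne

variable {R : Type*} [Ring R]

lemma monic_X_pow_sub_one {n : ℕ} (hn : n ≠ 0) : (X ^ n - 1 : R[X]).Monic := by
  simpa using monic_X_pow_sub_C (1 : R) hn

lemma X_pow_sub_one_ne_zero [Nontrivial R] {n : ℕ} (hn : n ≠ 0) : (X ^ n - 1 : R[X]) ≠ 0 :=
  (monic_X_pow_sub_one hn).ne_zero

lemma natDegree_X_pow_sub_one [Nontrivial R] (n : ℕ) : (X ^ n - 1 : R[X]).natDegree = n := by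
  simpa using natDegree_X_pow_sub_C (n := n) (r := (1 : R))

lemma coeff_zero_ne_zero_of_dvd_X_pow_sub_one [Nontrivial R] {n : ℕ} (hn : n ≠ 0) {g : R[X]}
    (hg : g ∣ X ^ n - 1) : g.coeff 0 ≠ 0 := fun h => by
  have := X_dvd_iff.mp ((X_dvd_iff.mpr h).trans hg)
  simp [coeff_X_pow, hn.symm] at this

lemma reverse_X_pow_sub_one (n : ℕ) : (X ^ n - 1 : R[X]).reverse = -(X ^ n - 1) := by
  nontriviality R
  cases n with
  | zero => simp
  | succ m =>
    have h : (X ^ (m + 1) - 1 : R[X]) = X ^ m * X + C (-1) := by simp [pow_succ, sub_eq_add_neg]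
    have hr : (X ^ m : R[X]).reverse = 1 := by
      rw [← mul_one (X ^ m), reverse_X_pow_mul, ← C_1, reverse_C]
    rw [h, reverse_add_C, reverse_mul_X, hr, ← pow_succ, natDegree_X_pow, C_neg, C_1,
      neg_one_mul, neg_add, neg_neg, add_comm]

end XPowSubOne

lemma reverse_eq_sum_range {R : Type*} [Semiring R] (p : R[X]) :
    p.reverse = ∑ j ∈ Finset.range (p.natDegree + 1), C (p.coeff j) * X ^ (p.natDegree - j) := by
  rw [p.reverse.as_sum_range_C_mul_X_pow' (Nat.lt_succ_of_le p.reverse_natDegree_le),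
    ← Finset.sum_range_reflect]
  refine Finset.sum_congr rfl fun j hj => ?_
  rw [Finset.mem_range, Nat.lt_succ_iff] at hj
  rw [Nat.succ_sub_one, coeff_reverse, revAt_le (Nat.sub_le _ _), Nat.sub_sub_self hj]

lemma natDegree_reverse_of_coeff_zero_ne_zero {R : Type*} [Semiring R] {p : R[X]}
    (hp : p.coeff 0 ≠ 0) : p.reverse.natDegree = p.natDegree := by
  rw [reverse_natDegree, natTrailingDegree_eq_zero.mpr (Or.inr hp), Nat.sub_zero]

/-- The conjugate reciprocal `∑ j, (p_j)² X^(deg p - j)` of `p`; the generator `g^{⊥h}` is the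
conjugate reciprocal of the check polynomial of `g`. -/
def conjReciprocal (p : F4[X]) : F4[X] := (p.map (frobenius F4 2)).reverse

lemma dualGen_eq_conjReciprocal (n : ℕ) (g : F4[X]) :
    dualGen n g = conjReciprocal ((X ^ n - 1) / g) := by
  simp only [dualGen, conjReciprocal, reverse_eq_sum_range, natDegree_map, coeff_map,
    frobenius_def]

lemma conjReciprocal_mul (p q : F4[X]) :
    conjReciprocal (p * q) = conjReciprocal p * conjReciprocal q := by
  rw [conjReciprocal, Polynomial.map_mul, reverse_mul_of_domain, conjReciprocal, conjReciprocal]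

lemma conjReciprocal_X_pow_sub_one (n : ℕ) : conjReciprocal (X ^ n - 1) = X ^ n - 1 := by
  rw [conjReciprocal, Polynomial.map_sub, Polynomial.map_pow, map_X, Polynomial.map_one,
    reverse_X_pow_sub_one, CharTwo.neg_eq]

lemma natDegree_conjReciprocal {p : F4[X]} (hp : p.coeff 0 ≠ 0) :
    (conjReciprocal p).natDegree = p.natDegree := by
  rw [conjReciprocal, natDegree_reverse_of_coeff_zero_ne_zero, natDegree_map]
  rwa [coeff_map, ne_eq, map_eq_zero]

lemma dualGen_mul_conjReciprocal {n : ℕ} (hn : n ≠ 0) {g : F4[X]} (hg : g ∣ X ^ n - 1) :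
    dualGen n g * conjReciprocal g = X ^ n - 1 := by
  have hg₀ : g ≠ 0 := ne_zero_of_dvd_ne_zero (X_pow_sub_one_ne_zero hn) hg
  rw [dualGen_eq_conjReciprocal, ← conjReciprocal_mul, mul_comm,
    EuclideanDomain.mul_div_cancel' hg₀ hg, conjReciprocal_X_pow_sub_one]

lemma F4_pow_four (a : F4) : a ^ 4 = a := by
  have := Fintype.ofFinite F4
  have h := FiniteField.pow_card a
  rwa [← Nat.card_eq_fintype_card, GaloisField.card 2 2 two_ne_zero] at h

lemma toRng_surjective (n : ℕ) : Function.Surjective (toRng n) := Ideal.Quotient.mk_surjective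

lemma toRng_C (n : ℕ) (a : F4) : toRng n (C a) = algebraMap F4 (Rng n) a := rfl

lemma toRng_monomial (n k : ℕ) (a : F4) : toRng n (monomial k a) = a • toRng n X ^ k := by
  rw [← C_mul_X_pow_eq_monomial, map_mul, map_pow, toRng_C]
  exact (Algebra.smul_def a _).symm

lemma toRng_eq_eval₂ (n : ℕ) (p : F4[X]) :
    toRng n p = p.eval₂ (algebraMap F4 (Rng n)) (toRng n X) := by
  conv_lhs => rw [← p.eval₂_C_X, hom_eval₂]
  rfl

lemma toRng_X_pow (n : ℕ) : toRng n X ^ n = 1 := by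
  rw [← map_pow, ← sub_eq_zero, ← map_one (toRng n), ← map_sub]
  exact Ideal.Quotient.mk_singleton_self _

lemma toRng_mod (n : ℕ) (p : F4[X]) : toRng n (p % (X ^ n - 1)) = toRng n p := by
  conv_rhs => rw [← EuclideanDomain.div_add_mod p (X ^ n - 1)]
  rw [map_add, map_mul, toRng, Ideal.Quotient.mk_singleton_self, zero_mul, zero_add]

lemma mem_span_toRng {n : ℕ} {g : F4[X]} {x : Rng n} :
    x ∈ Ideal.span {toRng n g} ↔ ∃ a, toRng n (a * g) = x := by
  simp only [Ideal.mem_span_singleton', (toRng_surjective n).exists, map_mul]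

lemma isUnit_toRng_of_isCoprime {n : ℕ} {p : F4[X]} (hp : IsCoprime p (X ^ n - 1)) :
    IsUnit (toRng n p) := by
  have h := hp.map (toRng n)
  rwa [toRng, Ideal.Quotient.mk_singleton_self, isCoprime_zero_right] at h

lemma isUnit_one_sub_toRng_sq {n : ℕ} {ν : F4[X]} (hν : IsCoprime (ν - 1) (X ^ n - 1)) :
    IsUnit (1 - toRng n ν ^ 2) := by
  have hsq := isUnit_toRng_of_isCoprime (hν.pow_left (m := 2))
  rw [sub_pow_char, one_pow, map_sub, map_pow, map_one] at hsq
  simpa using hsq.neg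

/-- The ring involution `σ` of `R` with `σ X = X⁻¹` and `σ a = a²` for `a ∈ F₄`; the inverse of `X`
is encoded as `X^(n-1)`. It is the conjugate transform `f ↦ f̄` on the level of `R`. -/
def conj (n : ℕ) : Rng n →+* Rng n :=
  Ideal.Quotient.lift _
    (eval₂RingHom ((algebraMap F4 (Rng n)).comp (frobenius F4 2)) (toRng n X ^ (n - 1)))
    fun p hp => by
      obtain ⟨q, rfl⟩ := Ideal.mem_span_singleton.mp hp
      rw [map_mul, map_sub, map_pow, map_one, coe_eval₂RingHom, eval₂_X, pow_right_comm,
        toRng_X_pow, one_pow, sub_self, zero_mul]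

lemma conj_algebraMap (n : ℕ) (a : F4) :
    conj n (algebraMap F4 (Rng n) a) = algebraMap F4 (Rng n) (a ^ 2) := eval₂_C _ _

lemma conj_toRng_X (n : ℕ) : conj n (toRng n X) = toRng n X ^ (n - 1) := eval₂_X _ _

lemma conj_toRng (n : ℕ) (p : F4[X]) : conj n (toRng n p) =
    p.eval₂ ((algebraMap F4 (Rng n)).comp (frobenius F4 2)) (conj n (toRng n X)) := by
  rw [conj_toRng_X]
  rfl

/-- The `F₄`-linear isomorphism `R ≃ F₄ⁿ` that `[·]ₙ` induces on the quotient; it identifies ideals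
of `R` with cyclic codes. -/
def coeffEquiv (n : ℕ) [NeZero n] : Rng n ≃ₗ[F4] (Fin n → F4) :=
  ((AdjoinRoot.powerBasis' (monic_X_pow_sub_one (NeZero.ne n))).basis.reindex
    (finCongr (natDegree_X_pow_sub_one n))).equivFun

/-- The coordinate isomorphism `R² ≃ F₄ⁿ × F₄ⁿ`, componentwise `coeffEquiv`. -/
def coeffPairEquiv (n : ℕ) [NeZero n] : (Rng n × Rng n) ≃ₗ[F4] (Fin n → F4) × (Fin n → F4) :=
  (coeffEquiv n).prodCongr (coeffEquiv n)

lemma hermInner_add_left {m : ℕ} (u v w : Fin m → F4) :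
    hermInner (u + v) w = hermInner u w + hermInner v w := by
  simp only [hermInner, Pi.add_apply, add_mul, Finset.sum_add_distrib]

lemma hermInner_sub_left {m : ℕ} (u v w : Fin m → F4) :
    hermInner (u - v) w = hermInner u w - hermInner v w := by
  simp only [hermInner, Pi.sub_apply, sub_mul, Finset.sum_sub_distrib]

lemma hermInner_sub_right {m : ℕ} (u v w : Fin m → F4) :
    hermInner u (v - w) = hermInner u v - hermInner u w := by
  simp only [hermInner, Pi.sub_apply, sub_pow_char, mul_sub, Finset.sum_sub_distrib]

lemma hermInner_smul_left {m : ℕ} (c : F4) (u w : Fin m → F4) :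
    hermInner (c • u) w = c * hermInner u w := by
  simp only [hermInner, Pi.smul_apply, smul_eq_mul, Finset.mul_sum, mul_assoc]

lemma hermInner_comp_equiv {m : ℕ} (u v : Fin m → F4) (e : Fin m ≃ Fin m) :
    hermInner (u ∘ e) (v ∘ e) = hermInner u v :=
  e.sum_comp fun i => u i * v i ^ 2

lemma hermInner_single_left {m : ℕ} (i : Fin m) (v : Fin m → F4) :
    hermInner (Pi.single i 1) v = v i ^ 2 := by
  simp [hermInner, Pi.single_apply]

lemma eq_zero_of_hermInner {m : ℕ} {v : Fin m → F4} (hv : ∀ u, hermInner u v = 0) : v = 0 := by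
  funext i
  exact pow_eq_zero_iff two_ne_zero |>.mp ((hermInner_single_left i v).symm.trans (hv _))

section CyclicCode

variable {n : ℕ} [NeZero n]

lemma toRng_X_mul_conj : toRng n X * conj n (toRng n X) = 1 := by
  rw [conj_toRng_X, mul_pow_sub_one (NeZero.ne n), toRng_X_pow]

lemma conj_toRng_X_pow {i : ℕ} (hi : i ≤ n) : conj n (toRng n X) ^ i = toRng n X ^ (n - i) := by
  refine left_inv_eq_right_inv (a := toRng n X ^ i) ?_ ?_
  · rw [← mul_pow, mul_comm, toRng_X_mul_conj, one_pow]
  · rw [← pow_add, Nat.add_sub_cancel' hi, toRng_X_pow]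

lemma toRng_conjT (f : F4[X]) : toRng n (conjT n f) = conj n (toRng n f) := by
  have hd : (f % (X ^ n - 1)).natDegree < n := by
    have hX := natDegree_X_pow_sub_one (R := F4) n
    exact (natDegree_mod_lt f (hX.trans_ne (NeZero.ne n))).trans_eq hX
  rw [← toRng_mod n f, conjT]
  generalize f % (X ^ n - 1) = r at hd ⊢
  conv_rhs => rw [r.as_sum_range_C_mul_X_pow' hd, Finset.range_eq_Ico,
    Finset.sum_eq_sum_Ico_succ_bot (NeZero.pos n)]
  simp only [map_add, map_sum, map_mul, map_pow, toRng_C, conj_algebraMap, pow_zero, mul_one]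
  congr 1
  refine Finset.sum_congr rfl fun i hi => ?_
  rw [conj_toRng_X_pow (Finset.mem_Ico.mp hi).2.le]

lemma coeffEquiv_toRng (p : F4[X]) : coeffEquiv n (toRng n p) = coeffVec n p := by
  funext i
  rw [coeffVec, ← modByMonic_eq_mod _ (monic_X_pow_sub_one (NeZero.ne n))]
  rfl

lemma coeffEquiv_toRng_X_pow (k : ℕ) :
    coeffEquiv n (toRng n X ^ k) = Pi.single (Fin.ofNat n k) 1 := by
  have hX : (X ^ n - 1 : F4[X]) ≠ 0 := X_pow_sub_one_ne_zero (NeZero.ne n)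
  have hlt : (X ^ (k % n) : F4[X]).degree < (X ^ n - 1 : F4[X]).degree := by
    rw [degree_X_pow, degree_eq_natDegree hX, natDegree_X_pow_sub_one]
    exact_mod_cast Nat.mod_lt k (NeZero.pos n)
  funext i
  rw [pow_eq_pow_mod k (toRng_X_pow n), ← map_pow, coeffEquiv_toRng, coeffVec,
    (mod_eq_self_iff hX).mpr hlt, coeff_X_pow, Pi.single_apply]
  simp [Fin.ext_iff, Fin.ofNat]

lemma coeffEquiv_toRng_X_mul (x : Rng n) :
    coeffEquiv n (toRng n X * x) = coeffEquiv n x ∘ Equiv.subRight 1 := by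
  obtain ⟨p, rfl⟩ := toRng_surjective n x
  induction p using Polynomial.induction_on' with
  | add p q hp hq =>
    rw [map_add, mul_add, map_add, map_add, hp, hq]
    rfl
  | monomial k a =>
    have succ : Fin.ofNat n (k + 1) = Fin.ofNat n k + 1 := by simp [Fin.ext_iff, Fin.val_add]
    funext i
    rw [toRng_monomial, mul_smul_comm, ← pow_succ', map_smul, map_smul, coeffEquiv_toRng_X_pow,
      coeffEquiv_toRng_X_pow, succ]
    simp [Pi.single_apply, sub_eq_iff_eq_add]

lemma hermInner_coeffEquiv_X_mul_left (x y : Rng n) :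
    hermInner (coeffEquiv n (toRng n X * x)) (coeffEquiv n y) =
      hermInner (coeffEquiv n x) (coeffEquiv n (conj n (toRng n X) * y)) := by
  have hy : y = toRng n X * (conj n (toRng n X) * y) := by
    rw [← mul_assoc, toRng_X_mul_conj, one_mul]
  conv_lhs => rw [hy]
  rw [coeffEquiv_toRng_X_mul, coeffEquiv_toRng_X_mul, hermInner_comp_equiv]

lemma hermInner_coeffEquiv_mul_left (r x y : Rng n) :
    hermInner (coeffEquiv n (r * x)) (coeffEquiv n y) =
      hermInner (coeffEquiv n x) (coeffEquiv n (conj n r * y)) := by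
  obtain ⟨p, rfl⟩ := toRng_surjective n r
  induction p using Polynomial.induction_on generalizing x y with
  | C a =>
    rw [toRng_C, conj_algebraMap, ← Algebra.smul_def, ← Algebra.smul_def, map_smul, map_smul,
      hermInner_smul_left, hermInner_smul_right, ← pow_mul, F4_pow_four]
  | add p q hp hq =>
    rw [map_add, map_add, add_mul, add_mul, map_add, map_add, hermInner_add_left,
      hermInner_add_right, hp, hq]
  | monomial k a ih =>
    rw [pow_succ, ← mul_assoc, map_mul (toRng n), map_mul (conj n), mul_assoc, ih,
      hermInner_coeffEquiv_X_mul_left, mul_left_comm, mul_assoc]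

lemma forall_mem_hermInner_eq_zero_iff (I : Ideal (Rng n)) (y : Rng n) :
    (∀ x ∈ I, hermInner (coeffEquiv n x) (coeffEquiv n y) = 0) ↔
      y ∈ (I.map (conj n)).annihilator := by
  rw [Ideal.map, Submodule.mem_annihilator_span]
  constructor
  · rintro h ⟨_, x, hx, rfl⟩
    rw [smul_eq_mul, mul_comm, ← (coeffEquiv n).map_eq_zero_iff]
    refine eq_zero_of_hermInner fun u => ?_
    obtain ⟨a, rfl⟩ := (coeffEquiv n).surjective u
    rw [← hermInner_coeffEquiv_mul_left]
    exact h _ (I.mul_mem_right a hx)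
  · intro h x hx
    have hxy : conj n x * y = 0 := by
      rw [mul_comm]
      exact h ⟨_, Set.mem_image_of_mem _ hx⟩
    rw [← mul_one x, hermInner_coeffEquiv_mul_left, hxy, map_zero]
    simp [hermInner]

lemma toRng_conjReciprocal_mul (g : F4[X]) :
    toRng n (conjReciprocal g) * conj n (toRng n X) ^ g.natDegree = conj n (toRng n g) := by
  let _ : Invertible (conj n (toRng n X)) :=
    ⟨toRng n X, toRng_X_mul_conj, (mul_comm _ _).trans toRng_X_mul_conj⟩
  have reflect := eval₂_reverse_mul_pow (algebraMap F4 (Rng n)) (conj n (toRng n X))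
    (g.map (frobenius F4 2))
  rw [natDegree_map, eval₂_map, ← conj_toRng] at reflect
  rw [← reflect, toRng_eq_eval₂ n (conjReciprocal g)]
  rfl

lemma annihilator_map_conj_span {g : F4[X]} (hg : g ∣ X ^ n - 1) :
    ((Ideal.span {toRng n g}).map (conj n)).annihilator = Ideal.span {toRng n (dualGen n g)} := by
  have hunit : IsUnit (conj n (toRng n X) ^ g.natDegree) :=
    (IsUnit.of_mul_eq_one_right _ toRng_X_mul_conj).pow _
  rw [Ideal.map_span, Set.image_singleton, ← toRng_conjReciprocal_mul,
    Ideal.span_singleton_mul_right_unit hunit]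
  have hX : (X ^ n - 1 : F4[X]) ≠ 0 := X_pow_sub_one_ne_zero (NeZero.ne n)
  have h := dualGen_mul_conjReciprocal (NeZero.ne n) hg
  exact annihilator_span_mk_of_mul_eq h (right_ne_zero_of_mul (h ▸ hX))

lemma finrank_span_dualGen {g : F4[X]} (hg : g ∣ X ^ n - 1) :
    Module.finrank F4 (Ideal.span {toRng n (dualGen n g)}) = g.natDegree := by
  have hX : (X ^ n - 1 : F4[X]) ≠ 0 := X_pow_sub_one_ne_zero (NeZero.ne n)
  have h := dualGen_mul_conjReciprocal (NeZero.ne n) hg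
  rw [← natDegree_conjReciprocal (coeff_zero_ne_zero_of_dvd_X_pow_sub_one (NeZero.ne n) hg)]
  exact finrank_span_mk_of_mul_eq h (left_ne_zero_of_mul (h ▸ hX))

end CyclicCode

section QuasiCyclicCode

variable {n : ℕ} [NeZero n]

/-- The quasi-cyclic code of length `2n` and index 2 obtained from the cyclic codes `I` and `J`
through the twist by `w`: all `(y - w x, x - w y)` with `x ∈ I` and `y ∈ J`, as coefficient
vectors. -/
def qcCode (w : Rng n) (I J : Ideal (Rng n)) : Submodule F4 ((Fin n → F4) × (Fin n → F4)) :=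
  (((Submodule.prod I J).map (twist w)).restrictScalars F4).map
    (coeffPairEquiv n : (Rng n × Rng n) →ₗ[F4] _)

lemma mem_qcCode {w : Rng n} {I J : Ideal (Rng n)} {v : (Fin n → F4) × (Fin n → F4)} :
    v ∈ qcCode w I J ↔ ∃ x ∈ I, ∃ y ∈ J,
      (coeffEquiv n (y - w * x), coeffEquiv n (x - w * y)) = v := by
  constructor
  · rintro ⟨_, ⟨⟨x, y⟩, ⟨hx, hy⟩, rfl⟩, rfl⟩
    exact ⟨x, hx, y, hy, rfl⟩
  · rintro ⟨x, hx, y, hy, rfl⟩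
    exact ⟨_, ⟨⟨x, y⟩, ⟨hx, hy⟩, rfl⟩, rfl⟩

lemma span_generators_eq_qcCode (w g₁ g₂ : F4[X]) :
    Submodule.span F4
      ({x | ∃ a, x = (coeffVec n (-w * a * g₁), coeffVec n (a * g₁))} ∪
       {x | ∃ b, x = (coeffVec n (b * g₂), coeffVec n (-w * b * g₂))}) =
      qcCode (toRng n w) (Ideal.span {toRng n g₁}) (Ideal.span {toRng n g₂}) := by
  simp only [← coeffEquiv_toRng]
  apply le_antisymm
  · rw [Submodule.span_le]
    rintro _ (⟨a, rfl⟩ | ⟨b, rfl⟩)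
    · refine mem_qcCode.mpr ⟨toRng n (a * g₁), mem_span_toRng.mpr ⟨a, rfl⟩, 0, zero_mem _, ?_⟩
      simp [mul_assoc]
    · refine mem_qcCode.mpr ⟨0, zero_mem _, toRng n (b * g₂), mem_span_toRng.mpr ⟨b, rfl⟩, ?_⟩
      simp [mul_assoc]
  · intro v hv
    obtain ⟨x, hx, y, hy, rfl⟩ := mem_qcCode.mp hv
    obtain ⟨a, rfl⟩ := mem_span_toRng.mp hx
    obtain ⟨b, rfl⟩ := mem_span_toRng.mp hy
    have split : (coeffEquiv n (toRng n (b * g₂) - toRng n w * toRng n (a * g₁)),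
          coeffEquiv n (toRng n (a * g₁) - toRng n w * toRng n (b * g₂))) =
        (coeffEquiv n (toRng n (-w * a * g₁)), coeffEquiv n (toRng n (a * g₁))) +
          (coeffEquiv n (toRng n (b * g₂)), coeffEquiv n (toRng n (-w * b * g₂))) := by
      simp only [Prod.mk_add_mk, ← map_add, ← map_mul, ← map_sub]
      congr 3 <;> ring
    rw [split]
    exact add_mem (Submodule.subset_span (Or.inl ⟨a, rfl⟩))
      (Submodule.subset_span (Or.inr ⟨b, rfl⟩))

lemma Cqc_eq_qcCode (g₁ g₂ ν : F4[X]) :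
    Cqc n g₁ g₂ ν = qcCode (-toRng n ν) (Ideal.span {toRng n g₁}) (Ideal.span {toRng n g₂}) := by
  rw [← map_neg, ← span_generators_eq_qcCode, Cqc]
  simp only [neg_neg, mul_comm]

lemma Dqc_eq_qcCode (g₁ g₂ ν : F4[X]) :
    Dqc n g₁ g₂ ν = qcCode (conj n (toRng n ν)) (Ideal.span {toRng n (dualGen n g₁)})
      (Ideal.span {toRng n (dualGen n g₂)}) := by
  rw [Dqc, span_generators_eq_qcCode, toRng_conjT]

lemma finrank_qcCode {w : Rng n} (hw : IsUnit (1 - w ^ 2)) (I J : Ideal (Rng n)) :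
    Module.finrank F4 (qcCode w I J) = Module.finrank F4 I + Module.finrank F4 J := by
  have : Module.Finite F4 (Rng n) := .equiv (coeffEquiv n).symm
  have e := Submodule.equivMapOfInjective _ (twist_injective hw) (Submodule.prod I J)
  rw [qcCode, LinearEquiv.finrank_map_eq]
  exact (e.restrictScalars F4).symm.finrank_eq.trans
    (finrank_submodule_prod (I.restrictScalars F4) (J.restrictScalars F4))

lemma hermInner2_twist (w : Rng n) (x y : Rng n × Rng n) :
    hermInner2 (coeffPairEquiv n (twist w x)) (coeffPairEquiv n y) =
      hermInner2 (coeffPairEquiv n x) (coeffPairEquiv n (twist (conj n w) y)) := by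
  simp only [hermInner2, coeffPairEquiv, LinearEquiv.prodCongr_apply, twist_apply, smul_eq_mul,
    map_sub, hermInner_sub_left, hermInner_sub_right, hermInner_coeffEquiv_mul_left]
  ring

lemma forall_mem_prod_hermInner2_eq_zero_iff (I J : Ideal (Rng n)) (z : Rng n × Rng n) :
    (∀ x ∈ Submodule.prod I J, hermInner2 (coeffPairEquiv n x) (coeffPairEquiv n z) = 0) ↔
      z ∈ Submodule.prod (I.map (conj n)).annihilator (J.map (conj n)).annihilator := by
  rw [Submodule.mem_prod, ← forall_mem_hermInner_eq_zero_iff, ← forall_mem_hermInner_eq_zero_iff]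
  constructor
  · intro h
    constructor
    · intro x hx
      simpa [hermInner2, coeffPairEquiv, hermInner] using h (x, 0) ⟨hx, J.zero_mem⟩
    · intro y hy
      simpa [hermInner2, coeffPairEquiv, hermInner] using h (0, y) ⟨I.zero_mem, hy⟩
  · rintro ⟨hI, hJ⟩ x ⟨hx₁, hx₂⟩
    exact (congrArg₂ (· + ·) (hI _ hx₁) (hJ _ hx₂)).trans (add_zero 0)

lemma mem_hermDualPair_qcCode {w : Rng n} {I J : Ideal (Rng n)} {z : Rng n × Rng n} :
    coeffPairEquiv n z ∈ hermDualPair (qcCode w I J) ↔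
      twist (conj n w) z ∈
        Submodule.prod (I.map (conj n)).annihilator (J.map (conj n)).annihilator := by
  simp only [← forall_mem_prod_hermInner2_eq_zero_iff, ← hermInner2_twist]
  exact ⟨fun h x hx => h _ ⟨_, ⟨x, hx, rfl⟩, rfl⟩, fun h => by
    rintro _ ⟨_, ⟨x, hx, rfl⟩, rfl⟩
    exact h x hx⟩

lemma hermDualPair_qcCode {w : Rng n} (hw : IsUnit (1 - w ^ 2)) (I J : Ideal (Rng n)) :
    hermDualPair (qcCode (-w) I J) = qcCode (conj n w) (I.map (conj n)).annihilator
      (J.map (conj n)).annihilator := by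
  ext v
  obtain ⟨z, rfl⟩ := (coeffPairEquiv n).surjective v
  rw [mem_hermDualPair_qcCode, map_neg, ← Submodule.mem_comap,
    ← map_twist_eq_comap_twist_neg (by simpa using hw.map (conj n))]
  exact ((coeffPairEquiv n).injective.mem_set_image).symm

end QuasiCyclicCode

theorem D_eq_herm_dual_C_general {n : ℕ} (hn : n ≠ 0) {g₁ g₂ ν : F4[X]}
    (hg₁ : g₁ ∣ X ^ n - 1) (hg₂ : g₂ ∣ X ^ n - 1) (hν : IsCoprime (ν - 1) (X ^ n - 1)) :
    Dqc n g₁ g₂ ν = hermDualPair (Cqc n g₁ g₂ ν) ∧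
      Module.finrank F4 (Dqc n g₁ g₂ ν) = g₁.natDegree + g₂.natDegree := by
  have : NeZero n := ⟨hn⟩
  have hunit := isUnit_one_sub_toRng_sq hν
  rw [Dqc_eq_qcCode]
  constructor
  · rw [Cqc_eq_qcCode, hermDualPair_qcCode hunit, annihilator_map_conj_span hg₁,
      annihilator_map_conj_span hg₂]
  · rw [finrank_qcCode (by simpa using hunit.map (conj n)), finrank_span_dualGen hg₁,
      finrank_span_dualGen hg₂]

/-- `D` is exactly the Hermitian dual code of the 2-generator quasi-cyclic code
`C(g₁,g₂,ν)`; in particular `dim D = deg g₁ + deg g₂`. -/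
theorem D_eq_herm_dual_C (n : ℕ) (hn : Odd n) (g₁ g₂ ν : Polynomial F4)
    (hg₁m : g₁.Monic) (hg₁d : g₁ ∣ X ^ n - 1)
    (hg₂m : g₂.Monic) (hg₂d : g₂ ∣ X ^ n - 1)
    (hcop : IsCoprime (ν - 1) (X ^ n - 1)) :
    Dqc n g₁ g₂ ν = hermDualPair (Cqc n g₁ g₂ ν) ∧
      Module.finrank F4 ↥(Dqc n g₁ g₂ ν) = g₁.natDegree + g₂.natDegree :=
  D_eq_herm_dual_C_general hn.pos.ne' hg₁d hg₂d hcop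

end
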